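/- Fix an integer d ≥ 1, δ ∈ (0,1), z ∈ [0, μ^{−1}), and x ∈ ℤ^d, and let p = z·2d/((1−δ)√π) ∈ [0,∞). Suppose ρ = ρ(g) is chosen so that g^{−1/2} e^{α(g,ρ(g))²} → p as g → ∞, where α(g,ρ) = (ρ−1)/(2√g), and additionally α(g,ρ(g)) → +∞ if p > 0. Then the continuous-time weakly self-avoiding walk two-point function converges to p√π times the strictly self-avoiding walk two-point function: lim_{g→∞} Σ_{n=0}^∞ w_n(g,ρ(g); x) = p √π · G_z(x), where G_z(x) = Σ_{n=0}^∞ c_n(x) z^n. (In particular, if p = 0 the limit is 0.) -/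

import Mathlib

/-!
Formalization of statements from "The strong interaction limit of
continuous-time weakly self-avoiding walk" by Brydges, Dahlqvist, Slade.

An `n`-step nearest-neighbour walk on `ℤ^d` starting at the origin is encoded
bijectively by its sequence of steps `s : Fin n → Fin d × Bool`, a step being a
coordinate direction together with a sign.
-/

open scoped BigOperators Topology
open Filter

namespace StrongInteraction

/-- The unit step in coordinate direction `e.1`, with sign `e.2`. -/
def stepVec (d : ℕ) (e : Fin d × Bool) : Fin d → ℤ :=
  fun i => if i = e.1 then (if e.2 then 1 else -1) else 0

/-- `walkPos s k` is the position `Y_k` of the walk started at the origin whose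
successive nearest-neighbour steps are given by `s`. -/
def walkPos {d n : ℕ} (s : Fin n → Fin d × Bool) (k : Fin (n + 1)) : Fin d → ℤ :=
  ∑ i ∈ Finset.univ.filter (fun i : Fin n => (i : ℕ) < (k : ℕ)), stepVec d (s i)

/-- `n_x(Y)`: the number of visits to `x` by the walk. -/
def visits {d n : ℕ} (s : Fin n → Fin d × Bool) (x : Fin d → ℤ) : ℕ :=
  (Finset.univ.filter (fun k : Fin (n + 1) => walkPos s k = x)).card

/-- The set of distinct vertices visited by the walk. -/
def walkRange {d n : ℕ} (s : Fin n → Fin d × Bool) : Finset (Fin d → ℤ) :=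
  Finset.image (walkPos s) Finset.univ

/-- A walk is self-avoiding when its positions are pairwise distinct. -/
def SelfAvoiding {d n : ℕ} (s : Fin n → Fin d × Bool) : Prop :=
  Function.Injective (walkPos s)

instance {d n : ℕ} (s : Fin n → Fin d × Bool) : Decidable (SelfAvoiding s) :=
  inferInstanceAs (Decidable (Function.Injective (walkPos s)))

/-- `c_n`: the number of `n`-step self-avoiding walks. -/
def csaw (d n : ℕ) : ℕ :=
  (Finset.univ.filter fun s : Fin n → Fin d × Bool => SelfAvoiding s).card


/-- `F_{g,ρ}(m) = ∫_0^∞ (s^{m-1}/(m-1)!) e^{-s - g s² + ρ s} ds`, the contribution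
of a vertex visited `m` times, obtained from the Gamma(m,1) density of the sum of
`m` independent Exp(1) holding times. -/
noncomputable def F (g ρ : ℝ) (m : ℕ) : ℝ :=
  ∫ t in Set.Ioi (0 : ℝ),
    (t ^ (m - 1) / (Nat.factorial (m - 1))) * Real.exp (-t - g * t ^ 2 + ρ * t)

/-- `c_n(x)`: the number of `n`-step self-avoiding walks ending at `x`. -/
def csawAt (d n : ℕ) (x : Fin d → ℤ) : ℕ :=
  (Finset.univ.filter fun s : Fin n → Fin d × Bool =>
    SelfAvoiding s ∧ walkPos s (Fin.last n) = x).card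

/-- `w_n(g,ρ;x)`: the continuous-time weakly self-avoiding walk weight of
`n`-step walks ending at `x`, for killing rate `δ`, expressed via the
Gamma-integral formula for the expectation over the exponential holding times. -/
noncomputable def wAt (d : ℕ) (δ : ℝ) (n : ℕ) (g ρ : ℝ) (x : Fin d → ℤ) : ℝ :=
  ((1 - δ) / (2 * d)) ^ n *
    ∑ s ∈ Finset.univ.filter (fun s : Fin n → Fin d × Bool => walkPos s (Fin.last n) = x),
      ∏ v ∈ walkRange s, F g ρ (visits s v)

/-! ### Gaussian integrals -/

lemma exp_quadratic_eq {g : ℝ} (hg : 0 < g) (c t : ℝ) :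
    Real.exp (-g * t ^ 2 + c * t) =
      Real.exp (c ^ 2 / (4 * g)) * Real.exp (-g * (t - c / (2 * g)) ^ 2) := by
  rw [← Real.exp_add]
  congr 1
  field_simp
  ring

lemma integrable_exp_quadratic {g : ℝ} (hg : 0 < g) (c : ℝ) :
    MeasureTheory.Integrable (fun t : ℝ => Real.exp (-g * t ^ 2 + c * t)) := by
  simp_rw [exp_quadratic_eq hg]
  exact ((integrable_exp_neg_mul_sq hg).comp_sub_right _).const_mul _

lemma setIntegral_exp_quadratic_le {g : ℝ} (hg : 0 < g) (c : ℝ) :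
    ∫ t in Set.Ioi (0 : ℝ), Real.exp (-g * t ^ 2 + c * t) ≤
      Real.exp (c ^ 2 / (4 * g)) * √(Real.pi / g) := by
  refine (MeasureTheory.setIntegral_le_integral (integrable_exp_quadratic hg c)
    (Eventually.of_forall fun t => (Real.exp_pos _).le)).trans_eq ?_
  simp_rw [exp_quadratic_eq hg]
  rw [MeasureTheory.integral_const_mul,
    MeasureTheory.integral_sub_right_eq_self (fun t : ℝ => Real.exp (-g * t ^ 2)),
    integral_gaussian]

lemma setIntegral_exp_quadratic {g : ℝ} (hg : 0 < g) (c : ℝ) :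
    ∫ t in Set.Ioi (0 : ℝ), Real.exp (-g * t ^ 2 + c * t) =
      (√g)⁻¹ * Real.exp ((c / (2 * √g)) ^ 2) *
        ∫ u in Set.Ioi (-(c / (2 * √g))), Real.exp (-1 * u ^ 2) := by
  have hs : 0 < √g := Real.sqrt_pos.2 hg
  have hsq : √g ^ 2 = g := Real.sq_sqrt hg.le
  have h1 := MeasureTheory.integral_comp_mul_left_Ioi
    (fun u : ℝ => Real.exp (-1 * (u - c / (2 * √g)) ^ 2)) 0 hs
  have h2 : ∫ u in Set.Ioi (0 : ℝ), Real.exp (-1 * (u - c / (2 * √g)) ^ 2) =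
      ∫ u in Set.Ioi (-(c / (2 * √g))), Real.exp (-1 * u ^ 2) := by
    have := (MeasureTheory.measurePreserving_sub_right MeasureTheory.volume
      (c / (2 * √g))).setIntegral_preimage_emb (measurableEmbedding_subRight _)
      (fun u : ℝ => Real.exp (-1 * u ^ 2)) (Set.Ioi (-(c / (2 * √g))))
    simpa using this
  rw [mul_zero, h2, smul_eq_mul] at h1
  rw [mul_right_comm, ← h1, mul_comm, ← MeasureTheory.integral_const_mul]
  refine MeasureTheory.integral_congr_ae (Eventually.of_forall fun t => ?_)
  simp only
  rw [← Real.exp_add]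
  congr 1
  generalize √g = r at *
  subst hsq
  field_simp
  ring

/-! ### The single-vertex weights -/

lemma F_nonneg (g ρ : ℝ) (m : ℕ) : 0 ≤ F g ρ m := by
  refine MeasureTheory.setIntegral_nonneg measurableSet_Ioi fun t ht => ?_
  have : (0 : ℝ) < t := ht
  positivity

lemma F_one (g ρ : ℝ) :
    F g ρ 1 = ∫ t in Set.Ioi (0 : ℝ), Real.exp (-g * t ^ 2 + (ρ - 1) * t) := by
  unfold F
  congr 1
  ext t
  simp only [Nat.sub_self, pow_zero, Nat.factorial_zero, Nat.cast_one, div_one, one_mul]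
  congr 1
  ring

lemma pow_div_factorial_le {κ t : ℝ} (hκ : 0 < κ) (ht : 0 ≤ t) (k : ℕ) :
    t ^ k / k.factorial ≤ κ⁻¹ ^ k * Real.exp (κ * t) := by
  have h := Real.pow_div_factorial_le_exp (κ * t) (by positivity) k
  calc t ^ k / k.factorial = κ⁻¹ ^ k * ((κ * t) ^ k / k.factorial) := by
        rw [mul_pow, inv_pow]
        field_simp
    _ ≤ _ := by gcongr

lemma F_le {g κ : ℝ} (hg : 0 < g) (hκ : 0 < κ) (ρ : ℝ) (m : ℕ) :
    F g ρ m ≤ Real.exp ((ρ - 1 + κ) ^ 2 / (4 * g)) * √(Real.pi / g) * κ⁻¹ ^ (m - 1) := by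
  have h : F g ρ m ≤
      ∫ t in Set.Ioi (0 : ℝ), κ⁻¹ ^ (m - 1) * Real.exp (-g * t ^ 2 + (ρ - 1 + κ) * t) := by
    refine MeasureTheory.integral_mono_of_nonneg ?_
      ((integrable_exp_quadratic hg _).const_mul _).integrableOn ?_
    · filter_upwards [MeasureTheory.ae_restrict_mem measurableSet_Ioi] with t ht
      have : (0 : ℝ) < t := ht
      simp only [Pi.zero_apply]
      positivity
    · filter_upwards [MeasureTheory.ae_restrict_mem measurableSet_Ioi] with t ht
      have ht' : (0 : ℝ) ≤ t := le_of_lt ht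
      calc _ ≤ κ⁻¹ ^ (m - 1) * Real.exp (κ * t) * Real.exp (-t - g * t ^ 2 + ρ * t) := by
            gcongr
            exact pow_div_factorial_le hκ ht' _
        _ = _ := by
            rw [mul_assoc, ← Real.exp_add]
            ring_nf
  rw [MeasureTheory.integral_const_mul] at h
  refine h.trans ?_
  rw [mul_comm]
  gcongr
  exact setIntegral_exp_quadratic_le hg _

/-- The scaling of `ρ(g)` forces `α(g, ρ(g)) / √g → 0`. -/
lemma tendsto_sub_one_div {p : ℝ} {ρ : ℝ → ℝ}
    (hlim : Tendsto (fun g : ℝ =>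
        (√g)⁻¹ * Real.exp (((ρ g - 1) / (2 * √g)) ^ 2)) atTop (𝓝 p)) :
    Tendsto (fun g : ℝ => (ρ g - 1) / (2 * g)) atTop (𝓝 0) := by
  have hsq : Tendsto (fun g : ℝ => ((ρ g - 1) / (2 * g)) ^ 2) atTop (𝓝 0) := by
    have h0 : Tendsto (fun g : ℝ => (√g)⁻¹ *
        ((√g)⁻¹ * Real.exp (((ρ g - 1) / (2 * √g)) ^ 2))) atTop (𝓝 0) := by
      simpa using (tendsto_inv_atTop_zero.comp Real.tendsto_sqrt_atTop).mul hlim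
    refine tendsto_of_tendsto_of_tendsto_of_le_of_le' tendsto_const_nhds h0
      (Eventually.of_forall fun g => sq_nonneg _) ?_
    filter_upwards [eventually_gt_atTop 0] with g hg
    have hs : 0 < √g := Real.sqrt_pos.2 hg
    have hgs : g = √g ^ 2 := (Real.sq_sqrt hg.le).symm
    have h1 := (Real.add_one_le_exp (((ρ g - 1) / (2 * √g)) ^ 2))
    have h2 : ((ρ g - 1) / (2 * g)) ^ 2 =
        (√g)⁻¹ * ((√g)⁻¹ * ((ρ g - 1) / (2 * √g)) ^ 2) := by
      generalize ρ g = r at *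
      generalize √g = q at *
      subst hgs
      field_simp
    rw [h2]
    gcongr
    linarith
  have := (Real.continuous_sqrt.tendsto 0).comp hsq
  rw [Real.sqrt_zero] at this
  refine (tendsto_zero_iff_abs_tendsto_zero _).2 ?_
  simpa [Function.comp_def, Real.sqrt_sq_eq_abs] using this

lemma tendsto_F_majorant {p : ℝ} {ρ : ℝ → ℝ}
    (hlim : Tendsto (fun g : ℝ =>
        (√g)⁻¹ * Real.exp (((ρ g - 1) / (2 * √g)) ^ 2)) atTop (𝓝 p)) (κ : ℝ) :
    Tendsto (fun g : ℝ => Real.exp ((ρ g - 1 + κ) ^ 2 / (4 * g)) * √(Real.pi / g)) atTop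
      (𝓝 (p * √Real.pi)) := by
  have h1 : Tendsto (fun g : ℝ => κ * ((ρ g - 1) / (2 * g)) + κ ^ 2 / 4 * g⁻¹) atTop (𝓝 0) := by
    simpa using ((tendsto_sub_one_div hlim).const_mul κ).add
      (tendsto_inv_atTop_zero.const_mul (κ ^ 2 / 4))
  have h2 := (hlim.mul ((Real.continuous_exp.tendsto 0).comp h1)).mul_const √Real.pi
  rw [Real.exp_zero, mul_one] at h2
  refine h2.congr' ?_
  filter_upwards [eventually_gt_atTop 0] with g hg
  have he : (ρ g - 1 + κ) ^ 2 / (4 * g) = ((ρ g - 1) / (2 * √g)) ^ 2 +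
      (κ * ((ρ g - 1) / (2 * g)) + κ ^ 2 / 4 * g⁻¹) := by
    rw [div_pow, mul_pow, Real.sq_sqrt hg.le]
    field_simp
    ring
  rw [Function.comp_apply, he, Real.exp_add _ (_ + _), Real.sqrt_div' _ hg.le,
    div_eq_mul_inv √Real.pi]
  generalize Real.exp _ = a
  generalize Real.exp _ = b
  ring

lemma tendsto_F_one {p : ℝ} (hp : 0 ≤ p) {ρ : ℝ → ℝ}
    (hlim : Tendsto (fun g : ℝ =>
        (√g)⁻¹ * Real.exp (((ρ g - 1) / (2 * √g)) ^ 2)) atTop (𝓝 p))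
    (hα : 0 < p → Tendsto (fun g : ℝ => (ρ g - 1) / (2 * √g)) atTop atTop) :
    Tendsto (fun g : ℝ => F g (ρ g) 1) atTop (𝓝 (p * √Real.pi)) := by
  rcases hp.eq_or_lt with rfl | hp
  · have hmaj := tendsto_F_majorant hlim 1
    rw [zero_mul] at hmaj ⊢
    refine tendsto_of_tendsto_of_tendsto_of_le_of_le' tendsto_const_nhds hmaj
      (Eventually.of_forall fun g => F_nonneg _ _ _) ?_
    filter_upwards [eventually_gt_atTop 0] with g hg
    simpa using F_le hg one_pos (ρ g) 1
  · have hI : Tendsto (fun g : ℝ =>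
        ∫ u in Set.Ioi (-((ρ g - 1) / (2 * √g))), Real.exp (-1 * u ^ 2)) atTop
        (𝓝 √Real.pi) := by
      have := (MeasureTheory.aecover_Ioi (μ := MeasureTheory.volume)
        (tendsto_neg_atTop_atBot.comp (hα hp))).integral_tendsto_of_countably_generated
        (integrable_exp_neg_mul_sq (b := 1) one_pos)
      rwa [integral_gaussian, div_one] at this
    refine (hlim.mul hI).congr' ?_
    filter_upwards [eventually_gt_atTop 0] with g hg
    rw [F_one, setIntegral_exp_quadratic hg]

lemma eventually_F_le {p : ℝ} (hp : 0 ≤ p) {ρ : ℝ → ℝ}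
    (hlim : Tendsto (fun g : ℝ =>
        (√g)⁻¹ * Real.exp (((ρ g - 1) / (2 * √g)) ^ 2)) atTop (𝓝 p))
    {A ε : ℝ} (hA : p * √Real.pi < A) (hε : 0 < ε) :
    ∀ᶠ g in atTop, ∀ m, 1 ≤ m → F g (ρ g) m ≤ A ^ m * ε ^ (m - 1) := by
  have hA0 : 0 < A := lt_of_le_of_lt (by positivity) hA
  have hAε : 0 < A * ε := mul_pos hA0 hε
  filter_upwards [eventually_gt_atTop 0,
    (tendsto_F_majorant hlim (A * ε)⁻¹).eventually (gt_mem_nhds hA)] with g hg hlt m hm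
  refine (F_le hg (inv_pos.2 hAε) (ρ g) m).trans ?_
  obtain ⟨k, rfl⟩ := Nat.exists_eq_add_of_le' hm
  rw [inv_inv, Nat.add_sub_cancel, mul_pow, pow_succ' A, mul_assoc A]
  gcongr

lemma tendsto_F_of_two_le {p : ℝ} (hp : 0 ≤ p) {ρ : ℝ → ℝ}
    (hlim : Tendsto (fun g : ℝ =>
        (√g)⁻¹ * Real.exp (((ρ g - 1) / (2 * √g)) ^ 2)) atTop (𝓝 p))
    {m : ℕ} (hm : 2 ≤ m) :
    Tendsto (fun g : ℝ => F g (ρ g) m) atTop (𝓝 0) := by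
  refine tendsto_order.2 ⟨fun a ha => Eventually.of_forall fun g => ha.trans_le (F_nonneg _ _ _),
    fun a ha => ?_⟩
  obtain ⟨A, hA⟩ := exists_gt (p * √Real.pi)
  have hcont : Tendsto (fun ε : ℝ => A ^ m * ε ^ (m - 1)) (𝓝[>] 0) (𝓝 0) := by
    have : Continuous fun ε : ℝ => A ^ m * ε ^ (m - 1) := by fun_prop
    have h := this.tendsto 0
    rw [zero_pow (by omega), mul_zero] at h
    exact h.mono_left nhdsWithin_le_nhds
  obtain ⟨ε, hlt, hε⟩ := ((hcont.eventually (gt_mem_nhds ha)).and self_mem_nhdsWithin).exists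
  filter_upwards [eventually_F_le hp hlim hA hε] with g hg
  exact (hg m (by omega)).trans_lt hlt

/-! ### Splitting walks -/

lemma walkPos_eq_sum {d n : ℕ} (s : Fin n → Fin d × Bool) (k : Fin (n + 1)) :
    walkPos s k = ∑ i : Fin n, if (i : ℕ) < k then stepVec d (s i) else 0 :=
  Finset.sum_filter _ _

lemma walkPos_append_of_le {d n m : ℕ} (s₁ : Fin n → Fin d × Bool) (s₂ : Fin m → Fin d × Bool)
    (k : Fin (n + m + 1)) (hk : (k : ℕ) ≤ n) :
    walkPos (Fin.append s₁ s₂) k = walkPos s₁ ⟨k, by omega⟩ := by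
  rw [walkPos_eq_sum, walkPos_eq_sum, Fin.sum_univ_add]
  simp only [Fin.append_left, Fin.append_right, Fin.val_castAdd, Fin.val_natAdd]
  rw [Finset.sum_eq_zero (s := (Finset.univ : Finset (Fin m))), add_zero]
  intro i _
  rw [if_neg (by omega)]

lemma walkPos_append_of_ge {d n m : ℕ} (s₁ : Fin n → Fin d × Bool) (s₂ : Fin m → Fin d × Bool)
    (k : Fin (n + m + 1)) (hk : n ≤ (k : ℕ)) :
    walkPos (Fin.append s₁ s₂) k =
      walkPos s₁ (Fin.last n) + walkPos s₂ ⟨k - n, by omega⟩ := by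
  rw [walkPos_eq_sum, walkPos_eq_sum, walkPos_eq_sum, Fin.sum_univ_add]
  simp only [Fin.append_left, Fin.append_right, Fin.val_castAdd, Fin.val_natAdd, Fin.val_last]
  congr 1 <;> refine Finset.sum_congr rfl fun i _ => ?_
  · rw [if_pos (by omega), if_pos i.isLt]
  · exact if_congr (by omega) rfl rfl

lemma walkPos_mem_walkRange {d n : ℕ} (s : Fin n → Fin d × Bool) (k : Fin (n + 1)) :
    walkPos s k ∈ walkRange s :=
  Finset.mem_image_of_mem _ (Finset.mem_univ k)

lemma walkPos_zero {d n : ℕ} (s : Fin n → Fin d × Bool) : walkPos s 0 = 0 := by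
  simp [walkPos]

lemma card_walkRange_le {d n : ℕ} (s : Fin n → Fin d × Bool) :
    (walkRange s).card ≤ n + 1 := by
  simpa [walkRange] using Finset.card_image_le (s := Finset.univ) (f := walkPos s)

lemma card_walkRange_eq_iff {d n : ℕ} (s : Fin n → Fin d × Bool) :
    (walkRange s).card = n + 1 ↔ SelfAvoiding s := by
  have := Finset.card_image_iff (s := Finset.univ) (f := walkPos s)
  simpa [walkRange, SelfAvoiding] using this

lemma card_walkRange_append_lt {d n m : ℕ} (s₁ : Fin n → Fin d × Bool)
    (s₂ : Fin m → Fin d × Bool) :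
    (walkRange (Fin.append s₁ s₂)).card < (walkRange s₁).card + (walkRange s₂).card := by
  set a := walkPos s₁ (Fin.last n) with ha
  have hsub : walkRange (Fin.append s₁ s₂) ⊆ walkRange s₁ ∪ (walkRange s₂).image (a + ·) := by
    intro v hv
    obtain ⟨k, -, rfl⟩ := Finset.mem_image.1 hv
    rcases le_total (k : ℕ) n with hk | hk
    · rw [walkPos_append_of_le s₁ s₂ k hk]
      exact Finset.mem_union_left _ (walkPos_mem_walkRange _ _)
    · rw [walkPos_append_of_ge s₁ s₂ k hk]
      exact Finset.mem_union_right _ (Finset.mem_image_of_mem _ (walkPos_mem_walkRange _ _))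
  have hinter : 0 < (walkRange s₁ ∩ (walkRange s₂).image (a + ·)).card := by
    refine Finset.card_pos.2 ⟨a, Finset.mem_inter.2 ⟨walkPos_mem_walkRange _ _,
      Finset.mem_image.2 ⟨0, ?_, add_zero a⟩⟩⟩
    rw [← walkPos_zero s₂]
    exact walkPos_mem_walkRange _ _
  have h1 := Finset.card_le_card hsub
  have h2 := Finset.card_union_add_card_inter (walkRange s₁) ((walkRange s₂).image (a + ·))
  have h3 : ((walkRange s₂).image (a + ·)).card ≤ (walkRange s₂).card := Finset.card_image_le
  omega

/-- The partition function of `n`-step walks in which every return to an already visited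
vertex is penalised by a factor `ε`. -/
noncomputable def returnSum (d n : ℕ) (ε : ℝ) : ℝ :=
  ∑ s : Fin n → Fin d × Bool, ε ^ (n + 1 - (walkRange s).card)

lemma returnSum_nonneg (d n : ℕ) {ε : ℝ} (hε : 0 ≤ ε) : 0 ≤ returnSum d n ε :=
  Finset.sum_nonneg fun _ _ => pow_nonneg hε _

lemma returnSum_zero (d n : ℕ) : returnSum d n 0 = csaw d n := by
  rw [returnSum, csaw, Finset.card_filter, Nat.cast_sum]
  refine Finset.sum_congr rfl fun s _ => ?_
  have h1 := card_walkRange_le s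
  have h2 := card_walkRange_eq_iff s
  by_cases hs : SelfAvoiding s
  · simp [hs, h2.2 hs]
  · have h3 : (walkRange s).card ≠ n + 1 := fun h => hs (h2.1 h)
    rw [zero_pow (by omega)]
    simp [hs]

lemma returnSum_add_le (d n m : ℕ) {ε : ℝ} (hε : 0 ≤ ε) (hε1 : ε ≤ 1) :
    returnSum d (n + m) ε ≤ returnSum d n ε * returnSum d m ε := by
  rw [returnSum, returnSum, returnSum, Finset.sum_mul_sum, ← Finset.sum_product',
    Finset.univ_product_univ, ← (Fin.appendEquiv n m).sum_comp]
  refine Finset.sum_le_sum fun s _ => ?_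
  rw [← pow_add]
  refine pow_le_pow_of_le_one hε hε1 ?_
  have h1 := card_walkRange_append_lt s.1 s.2
  have h2 := card_walkRange_le s.1
  have h3 := card_walkRange_le s.2
  change _ ≤ n + m + 1 - (walkRange (Fin.append s.1 s.2)).card
  omega

lemma summable_of_submultiplicative {a : ℕ → ℝ} (h0 : ∀ n, 0 ≤ a n) {N : ℕ} (hN : a N < 1)
    (ha : ∀ m, a (N + m) ≤ a N * a m) : Summable a := by
  refine summable_of_sum_range_le (c := (∑ i ∈ Finset.range N, a i) / (1 - a N)) h0 fun m => ?_
  rw [le_div_iff₀ (by linarith)]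
  have h1 : ∑ i ∈ Finset.range m, a i ≤ ∑ i ∈ Finset.range (N + m), a i :=
    Finset.sum_le_sum_of_subset_of_nonneg
      (Finset.range_subset_range.2 (by omega)) fun i _ _ => h0 i
  rw [Finset.sum_range_add] at h1
  have h2 : ∑ i ∈ Finset.range m, a (N + i) ≤ a N * ∑ i ∈ Finset.range m, a i := by
    rw [Finset.mul_sum]
    exact Finset.sum_le_sum fun i _ => ha i
  linarith

/-- Below the self-avoiding critical point, a small enough penalty keeps the walk subcritical. -/
lemma exists_summable_returnSum {d : ℕ} {μ z : ℝ}
    (hμ : Tendsto (fun n : ℕ => (csaw d n : ℝ) ^ ((n : ℝ)⁻¹)) atTop (𝓝 μ))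
    (hz0 : 0 < z) (hz : z < μ⁻¹) :
    ∃ ε : ℝ, 0 < ε ∧ Summable fun n => returnSum d n ε * z ^ n := by
  have hμz : μ < z⁻¹ := by
    rwa [lt_inv_comm₀ (inv_pos.1 (hz0.trans hz)) hz0]
  obtain ⟨N, hN, hN0⟩ := ((hμ.eventually (gt_mem_nhds hμz)).and (eventually_ne_atTop 0)).exists
  have hlt : (csaw d N : ℝ) * z ^ N < 1 := by
    have h := pow_lt_pow_left₀ hN (by positivity) hN0
    rw [Real.rpow_inv_natCast_pow (by positivity) hN0, inv_pow] at h
    rwa [← one_div, lt_div_iff₀ (by positivity)] at h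
  have hcont : Continuous fun ε : ℝ => returnSum d N ε * z ^ N := by
    unfold returnSum
    fun_prop
  have h := hcont.tendsto 0
  rw [returnSum_zero] at h
  obtain ⟨ε, hε, hε0, hε1⟩ := (((h.mono_left nhdsWithin_le_nhds).eventually
    (gt_mem_nhds hlt)).and (Ioo_mem_nhdsGT (zero_lt_one (α := ℝ)))).exists
  refine ⟨ε, hε0, summable_of_submultiplicative
    (fun n => mul_nonneg (returnSum_nonneg d n hε0.le) (by positivity)) hε fun m => ?_⟩
  calc returnSum d (N + m) ε * z ^ (N + m)
      ≤ (returnSum d N ε * returnSum d m ε) * z ^ (N + m) := by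
        gcongr
        exact returnSum_add_le d N m hε0.le hε1.le
    _ = _ := by rw [pow_add]; ring

/-! ### Walk weights -/

lemma sum_visits {d n : ℕ} (s : Fin n → Fin d × Bool) :
    ∑ v ∈ walkRange s, visits s v = n + 1 := by
  simpa [visits, walkRange] using
    (Finset.card_eq_sum_card_image (walkPos s) Finset.univ).symm

lemma one_le_visits {d n : ℕ} {s : Fin n → Fin d × Bool} {v : Fin d → ℤ}
    (hv : v ∈ walkRange s) : 1 ≤ visits s v := by
  obtain ⟨k, -, rfl⟩ := Finset.mem_image.1 hv
  exact Finset.card_pos.2 ⟨k, by simp⟩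

lemma visits_eq_one {d n : ℕ} {s : Fin n → Fin d × Bool} (hs : SelfAvoiding s)
    {v : Fin d → ℤ} (hv : v ∈ walkRange s) : visits s v = 1 := by
  obtain ⟨k, -, rfl⟩ := Finset.mem_image.1 hv
  exact Finset.card_eq_one.2 ⟨k, by ext j; simp [hs.eq_iff]⟩

lemma exists_two_le_visits {d n : ℕ} {s : Fin n → Fin d × Bool} (hs : ¬ SelfAvoiding s) :
    ∃ v ∈ walkRange s, 2 ≤ visits s v := by
  by_contra! h
  refine hs ((card_walkRange_eq_iff s).1 ?_)
  rw [← sum_visits s, Finset.card_eq_sum_ones]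
  exact Finset.sum_congr rfl fun v hv => by
    have := h v hv
    have := one_le_visits hv
    omega

lemma prod_F_le {d n : ℕ} (s : Fin n → Fin d × Bool) {g ρ A ε : ℝ}
    (hF : ∀ m, 1 ≤ m → F g ρ m ≤ A ^ m * ε ^ (m - 1)) :
    ∏ v ∈ walkRange s, F g ρ (visits s v) ≤ A ^ (n + 1) * ε ^ (n + 1 - (walkRange s).card) := by
  refine (Finset.prod_le_prod (fun v _ => F_nonneg _ _ _)
    fun v hv => hF _ (one_le_visits hv)).trans_eq ?_
  rw [Finset.prod_mul_distrib, Finset.prod_pow_eq_pow_sum, Finset.prod_pow_eq_pow_sum, sum_visits]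
  congr 2
  rw [← sum_visits s, Finset.card_eq_sum_ones, Finset.sum_tsub_distrib]
  exact fun v hv => one_le_visits hv

lemma wAt_nonneg {d n : ℕ} {δ : ℝ} (hδ : δ < 1) (g ρ : ℝ) (x : Fin d → ℤ) :
    0 ≤ wAt d δ n g ρ x := by
  have : 0 < 1 - δ := by linarith
  exact mul_nonneg (by positivity) (Finset.sum_nonneg fun s _ =>
    Finset.prod_nonneg fun v _ => F_nonneg _ _ _)

lemma wAt_le {d n : ℕ} {δ g ρ A ε : ℝ} (hδ : δ < 1) (hA : 0 ≤ A) (hε : 0 ≤ ε) (x : Fin d → ℤ)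
    (hF : ∀ m, 1 ≤ m → F g ρ m ≤ A ^ m * ε ^ (m - 1)) :
    wAt d δ n g ρ x ≤ A * (returnSum d n ε * ((1 - δ) / (2 * d) * A) ^ n) := by
  have h1δ : 0 < 1 - δ := by linarith
  have hsum : ∑ s ∈ Finset.univ.filter
      (fun s : Fin n → Fin d × Bool => walkPos s (Fin.last n) = x),
      ∏ v ∈ walkRange s, F g ρ (visits s v) ≤ A ^ (n + 1) * returnSum d n ε := by
    rw [returnSum, Finset.mul_sum]
    refine (Finset.sum_le_sum fun s _ => prod_F_le s hF).trans
      (Finset.sum_le_sum_of_subset_of_nonneg (Finset.filter_subset _ _) fun s _ _ => ?_)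
    positivity
  calc wAt d δ n g ρ x
      ≤ ((1 - δ) / (2 * d)) ^ n * (A ^ (n + 1) * returnSum d n ε) := by
        unfold wAt
        gcongr
    _ = _ := by rw [mul_pow, pow_succ]; ring

lemma tendsto_prod_F {d n : ℕ} (s : Fin n → Fin d × Bool) {f : ℝ → ℝ} {L : ℝ}
    (h1 : Tendsto (fun g => F g (f g) 1) atTop (𝓝 L))
    (h2 : ∀ m, 2 ≤ m → Tendsto (fun g => F g (f g) m) atTop (𝓝 0)) :
    Tendsto (fun g => ∏ v ∈ walkRange s, F g (f g) (visits s v)) atTop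
      (𝓝 (if SelfAvoiding s then L ^ (n + 1) else 0)) := by
  have hlim : Tendsto (fun g => ∏ v ∈ walkRange s, F g (f g) (visits s v)) atTop
      (𝓝 (∏ v ∈ walkRange s, if visits s v = 1 then L else 0)) := by
    refine tendsto_finsetProd _ fun v hv => ?_
    have := one_le_visits hv
    split_ifs with h
    · rwa [h]
    · exact h2 _ (by omega)
  convert hlim using 2
  split_ifs with hs
  · rw [Finset.prod_congr rfl fun v hv => if_pos (visits_eq_one hs hv), Finset.prod_const,
      (card_walkRange_eq_iff s).2 hs]
  · obtain ⟨v, hv, h⟩ := exists_two_le_visits hs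
    exact (Finset.prod_eq_zero hv (if_neg (by omega))).symm

lemma tendsto_wAt {d : ℕ} (n : ℕ) (δ : ℝ) (x : Fin d → ℤ) {f : ℝ → ℝ} {L : ℝ}
    (h1 : Tendsto (fun g => F g (f g) 1) atTop (𝓝 L))
    (h2 : ∀ m, 2 ≤ m → Tendsto (fun g => F g (f g) m) atTop (𝓝 0)) :
    Tendsto (fun g => wAt d δ n g (f g) x) atTop
      (𝓝 (L * (csawAt d n x * ((1 - δ) / (2 * d) * L) ^ n))) := by
  have h := (tendsto_finsetSum (Finset.univ.filter
    (fun s : Fin n → Fin d × Bool => walkPos s (Fin.last n) = x))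
    fun s _ => tendsto_prod_F s h1 h2).const_mul (((1 - δ) / (2 * d)) ^ n)
  refine h.trans_eq (congrArg 𝓝 ?_)
  rw [← Finset.sum_filter, Finset.filter_filter, Finset.sum_const, nsmul_eq_mul, csawAt, mul_pow]
  simp_rw [and_comm]
  generalize ((1 - δ) / (2 * (d : ℝ))) ^ n = b
  ring

/-- for `z ∈ [0, μ⁻¹)` and `p = z·2d/((1-δ)√π)`, under the scaling
`g^{-1/2} e^{α(g,ρ(g))²} → p` (with `α(g,ρ(g)) → ∞` if `p > 0`), the
continuous-time weakly self-avoiding walk two-point function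
`Σ_n w_n(g,ρ(g);x)` converges to `p √π G_z(x)` as `g → ∞`. -/
theorem two_point_function_limit (d : ℕ) (hd : 1 ≤ d) (δ : ℝ)
    (hδ : δ ∈ Set.Ioo (0 : ℝ) 1) (muSAW : ℝ)
    (hmuSAW : Tendsto (fun n : ℕ => ((csaw d n : ℝ)) ^ ((n : ℝ)⁻¹)) atTop (𝓝 muSAW))
    (z : ℝ) (hz0 : 0 ≤ z) (hz : z < muSAW⁻¹) (x : Fin d → ℤ)
    (p : ℝ) (hp : p = z * (2 * d) / ((1 - δ) * Real.sqrt Real.pi))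
    (ρ : ℝ → ℝ)
    (hlim : Tendsto (fun g : ℝ =>
        g ^ (-(1 : ℝ) / 2) * Real.exp (((ρ g - 1) / (2 * Real.sqrt g)) ^ 2)) atTop (𝓝 p))
    (hα : 0 < p → Tendsto (fun g : ℝ => (ρ g - 1) / (2 * Real.sqrt g)) atTop atTop) :
    Tendsto (fun g : ℝ => ∑' n : ℕ, wAt d δ n g (ρ g) x) atTop
      (𝓝 (p * Real.sqrt Real.pi * ∑' n : ℕ, (csawAt d n x : ℝ) * z ^ n)) := by
  have h1δ : 0 < 1 - δ := by linarith [hδ.2]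
  have hd0 : (0 : ℝ) < d := by exact_mod_cast hd
  have hπ : 0 < √Real.pi := Real.sqrt_pos.2 Real.pi_pos
  set β : ℝ := (1 - δ) / (2 * d) with hβ
  have hβ0 : 0 < β := by positivity
  have hp0 : 0 ≤ p := by rw [hp]; positivity
  have hβp : β * (p * √Real.pi) = z := by
    rw [hβ, hp]
    field_simp
  have hlim' : Tendsto (fun g : ℝ => (√g)⁻¹ * Real.exp (((ρ g - 1) / (2 * √g)) ^ 2)) atTop
      (𝓝 p) := by
    refine hlim.congr' ?_
    filter_upwards [eventually_ge_atTop 0] with g hg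
    rw [neg_div, Real.rpow_neg hg, Real.sqrt_eq_rpow]
  obtain ⟨y, hzy, hy⟩ := exists_between hz
  have hA : p * √Real.pi < y / β := by
    rwa [lt_div_iff₀ hβ0, mul_comm, hβp]
  have hy0 : 0 < y := hz0.trans_lt hzy
  obtain ⟨ε, hε, hsum⟩ := exists_summable_returnSum hmuSAW hy0 hy
  have key := tendsto_tsum_of_dominated_convergence (hsum.mul_left (y / β))
    (fun n => tendsto_wAt n δ x (tendsto_F_one hp0 hlim' hα)
      fun m hm => tendsto_F_of_two_le hp0 hlim' hm) (by
    filter_upwards [eventually_F_le hp0 hlim' hA hε] with g hg n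
    rw [Real.norm_of_nonneg (wAt_nonneg hδ.2 _ _ _)]
    have := wAt_le (n := n) hδ.2 (div_nonneg hy0.le hβ0.le) hε.le x hg
    rwa [← hβ, mul_div_cancel₀ _ hβ0.ne'] at this)
  simpa only [← hβ, hβp, tsum_mul_left] using key

end StrongInteraction
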